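/- Let p be an odd prime, let k be a field of characteristic p, and let ξ ∈ k be a primitive 2(p−1)-th root of unity. Let f := X^{p²} − X viewed in RatFunc k, and let K := (RatFunc k)[Y]/(Y² − f). Then: (a) the polynomial Y² − f is irreducible over RatFunc k, so K is a field of degree 2 over RatFunc k; (b) writing t and y for the images in K of X and of the adjoined root of Y² − f, there exist k-algebra automorphisms σ and ρ of K with σ(t) = t + 1, σ(y) = y, ρ(t) = ξ⁻²·t and ρ(y) = ξ⁻¹·y; (c) σ has order p, ρ has order 2(p−1), ρ^{p−1} fixes t and sends y to −y, and the subgroup of the k-automorphism group of K generated by {σ, ρ} is finite of order 2·p·(p−1). -/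

import Mathlib

/-- The polynomial `Y² - (X^{p²} - X)` over the rational function field `k(X)`. -/
noncomputable def hyperellipticPoly (k : Type*) [Field k] (p : ℕ) :
    Polynomial (RatFunc k) :=
  Polynomial.X ^ 2 - Polynomial.C (RatFunc.X ^ p ^ 2 - RatFunc.X)

open Polynomial in
lemma hyp_irreducible (p : ℕ) (hodd : Odd p) (hp : p.Prime) (k : Type*) [Field k] :
    Irreducible (hyperellipticPoly k p) := by
  unfold hyperellipticPoly
  refine X_pow_sub_C_irreducible_of_prime Nat.prime_two ?_
  intro b hb
  have h1 : 1 < p ^ 2 := Nat.one_lt_pow (by norm_num) hp.one_lt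
  have hdeg : (X ^ p ^ 2 - X : k[X]).natDegree = p ^ 2 := by
    rw [natDegree_sub_eq_left_of_natDegree_lt] <;> simp [h1]
  have hf : (RatFunc.X ^ p ^ 2 - RatFunc.X : RatFunc k)
      = algebraMap k[X] (RatFunc k) (X ^ p ^ 2 - X) := by
    simp
  have hne : (X ^ p ^ 2 - X : k[X]) ≠ 0 := by
    intro h
    rw [h] at hdeg
    simp at hdeg
    exact pow_ne_zero 2 hp.ne_zero hdeg.symm
  have hb0 : b ≠ 0 := by
    rintro rfl
    rw [hf] at hb
    have : algebraMap k[X] (RatFunc k) (X ^ p ^ 2 - X) = 0 := by rw [← hb]; simp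
    exact hne ((map_eq_zero_iff _ (RatFunc.algebraMap_injective k)).1 this)
  have h2 := congrArg RatFunc.intDegree hb
  rw [hf, RatFunc.intDegree_polynomial, hdeg, pow_two, RatFunc.intDegree_mul hb0 hb0] at h2
  have : Odd (p ^ 2) := hodd.pow
  obtain ⟨m, hm⟩ := this
  omega

lemma hyp_root_sq (p : ℕ) (k : Type*) [Field k] :
    AdjoinRoot.root (hyperellipticPoly k p) ^ 2 =
      algebraMap (RatFunc k) (AdjoinRoot (hyperellipticPoly k p)) RatFunc.X ^ p ^ 2
      - algebraMap (RatFunc k) (AdjoinRoot (hyperellipticPoly k p)) RatFunc.X := by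
  have h := AdjoinRoot.eval₂_root (hyperellipticPoly k p)
  conv at h =>
    lhs
    arg 3
    rw [hyperellipticPoly]
  simp only [Polynomial.eval₂_sub, Polynomial.eval₂_pow, Polynomial.eval₂_X,
    Polynomial.eval₂_C, map_sub, map_pow] at h
  rw [AdjoinRoot.algebraMap_eq]
  exact sub_eq_zero.1 h

open Polynomial in
lemma hyp_ext (p : ℕ) (k : Type*) [Field k]
    {φ ψ : AdjoinRoot (hyperellipticPoly k p) →ₐ[k] AdjoinRoot (hyperellipticPoly k p)}
    (ht : φ (algebraMap (RatFunc k) (AdjoinRoot (hyperellipticPoly k p)) RatFunc.X)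
      = ψ (algebraMap (RatFunc k) (AdjoinRoot (hyperellipticPoly k p)) RatFunc.X))
    (hy : φ (AdjoinRoot.root (hyperellipticPoly k p)) = ψ (AdjoinRoot.root _)) : φ = ψ := by
  refine AdjoinRoot.algHom_ext' ?_ hy
  apply AlgHom.coe_ringHom_injective
  apply IsLocalization.ringHom_ext (nonZeroDivisors k[X])
  apply Polynomial.ringHom_ext
  · intro a
    have : algebraMap k[X] (RatFunc k) (C a) = algebraMap k (RatFunc k) a := by simp
    have h2 : ∀ χ : AdjoinRoot (hyperellipticPoly k p) →ₐ[k] AdjoinRoot (hyperellipticPoly k p),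
        χ (algebraMap (RatFunc k) _ (algebraMap k[X] (RatFunc k) (C a))) = algebraMap k _ a := by
      intro χ
      rw [this, ← IsScalarTower.algebraMap_apply, AlgHom.commutes]
    exact (h2 φ).trans (h2 ψ).symm
  · simpa using ht

open Polynomial in
lemma hyp_hom (p : ℕ) (hp : p.Prime) (k : Type*) [Field k] [CharP k p]
    (a b c : k) (ha : a ≠ 0) (hap : a ^ p = a) (hbp : b ^ p = b) (hc : c ^ 2 = a) :
    ∃ φ : AdjoinRoot (hyperellipticPoly k p) →ₐ[k] AdjoinRoot (hyperellipticPoly k p),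
      φ (algebraMap (RatFunc k) (AdjoinRoot (hyperellipticPoly k p)) RatFunc.X)
        = algebraMap k _ a * algebraMap (RatFunc k) _ RatFunc.X + algebraMap k _ b ∧
      φ (AdjoinRoot.root (hyperellipticPoly k p)) = algebraMap k _ c * AdjoinRoot.root _ := by
  have : Fact p.Prime := ⟨hp⟩
  let : Invertible a := invertibleOfNonzero ha
  let e : k[X] →ₐ[k] k[X] := (algEquivCMulXAddC a b : k[X] ≃ₐ[k] k[X])
  have he : Function.Injective e := (algEquivCMulXAddC a b).injective
  let m : RatFunc k →ₐ[k] RatFunc k := RatFunc.mapAlgHom e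
    (nonZeroDivisors_le_comap_nonZeroDivisors_of_injective _ he)
  have hm : m RatFunc.X = algebraMap k _ a * RatFunc.X + algebraMap k _ b := by
    have : m (algebraMap k[X] _ X) = algebraMap k[X] _ (e X) := by
      simp only [m, RatFunc.coe_mapAlgHom_eq_coe_map]
      have := RatFunc.map_apply_div e
        (nonZeroDivisors_le_comap_nonZeroDivisors_of_injective _ he) X 1
      simpa using this
    rw [RatFunc.algebraMap_X] at this
    rw [this]
    simp [e]
  have : CharP (RatFunc k) p := charP_of_injective_algebraMap (algebraMap k _).injective p
  let i : RatFunc k →ₐ[k] AdjoinRoot (hyperellipticPoly k p) :=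
    (IsScalarTower.toAlgHom k (RatFunc k) (AdjoinRoot (hyperellipticPoly k p))).comp m
  have hi : i RatFunc.X = algebraMap k _ a * algebraMap (RatFunc k) _ RatFunc.X
      + algebraMap k _ b := by
    simp only [i, hm, AlgHom.comp_apply, IsScalarTower.coe_toAlgHom', map_add, map_mul,
      ← IsScalarTower.algebraMap_apply]
  have hpp : ∀ x : k, x ^ p = x → x ^ p ^ 2 = x := fun x hx => by
    rw [pow_two, pow_mul, hx, hx]
  have hmf : m (RatFunc.X ^ p ^ 2 - RatFunc.X) =
      algebraMap k _ a * (RatFunc.X ^ p ^ 2 - RatFunc.X) := by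
    rw [map_sub, map_pow, hm, add_pow_char_pow, mul_pow, ← map_pow, ← map_pow, hpp a hap,
      hpp b hbp]
    ring
  refine ⟨AdjoinRoot.liftAlgHom _ i (algebraMap k _ c * AdjoinRoot.root _) ?_, ?_, ?_⟩
  · conv_lhs =>
      arg 3
      rw [hyperellipticPoly]
    have h1 : i (RatFunc.X ^ p ^ 2 - RatFunc.X) = algebraMap k _ a *
        AdjoinRoot.root (hyperellipticPoly k p) ^ 2 := by
      rw [hyp_root_sq]
      simp only [i, AlgHom.comp_apply, hmf]
      simp only [IsScalarTower.coe_toAlgHom', map_mul, map_sub, map_pow,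
        ← IsScalarTower.algebraMap_apply]
    rw [Polynomial.eval₂_sub, Polynomial.eval₂_pow, Polynomial.eval₂_X, Polynomial.eval₂_C]
    erw [h1]
    rw [mul_pow, ← map_pow, hc, sub_self]
  · rw [← hi]
    exact AdjoinRoot.liftAlgHom_of _ _ _ _ _
  · rw [AdjoinRoot.liftAlgHom_root]

lemma hyp_equiv (p : ℕ) (hp : p.Prime) (k : Type*) [Field k] [CharP k p]
    (a b c : k) (ha : a ≠ 0) (hap : a ^ p = a) (hbp : b ^ p = b) (hc : c ^ 2 = a) :
    ∃ φ : AdjoinRoot (hyperellipticPoly k p) ≃ₐ[k] AdjoinRoot (hyperellipticPoly k p),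
      φ (algebraMap (RatFunc k) (AdjoinRoot (hyperellipticPoly k p)) RatFunc.X)
        = algebraMap k _ a * algebraMap (RatFunc k) _ RatFunc.X + algebraMap k _ b ∧
      φ (AdjoinRoot.root (hyperellipticPoly k p)) = algebraMap k _ c * AdjoinRoot.root _ := by
  have : Fact p.Prime := ⟨hp⟩
  have hc0 : c ≠ 0 := by rintro rfl; simp at hc; exact ha hc.symm
  have hneg : (-(a⁻¹ * b)) ^ p = -(a⁻¹ * b) := by
    have := sub_pow_char (R := k) (p := p) 0 (a⁻¹ * b)
    rw [zero_pow hp.ne_zero, zero_sub, zero_sub, mul_pow, inv_pow, hap, hbp] at this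
    exact this
  obtain ⟨φ, h1, h2⟩ := hyp_hom p hp k a b c ha hap hbp hc
  obtain ⟨ψ, h3, h4⟩ := hyp_hom p hp k a⁻¹ (-(a⁻¹ * b)) c⁻¹ (inv_ne_zero ha)
    (by rw [inv_pow, hap]) hneg (by rw [inv_pow, hc])
  have e1 : algebraMap k (AdjoinRoot (hyperellipticPoly k p)) a * algebraMap k _ a⁻¹ = 1 := by
    rw [← map_mul, mul_inv_cancel₀ ha, map_one]
  have e2 : algebraMap k (AdjoinRoot (hyperellipticPoly k p)) c * algebraMap k _ c⁻¹ = 1 := by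
    rw [← map_mul, mul_inv_cancel₀ hc0, map_one]
  refine ⟨AlgEquiv.ofAlgHom φ ψ ?_ ?_, h1, h2⟩
  · apply hyp_ext
    · simp only [AlgHom.comp_apply, h3, h1, map_add, map_mul, AlgHom.commutes, map_neg,
        AlgHom.id_apply]
      linear_combination (algebraMap (RatFunc k) (AdjoinRoot (hyperellipticPoly k p)) RatFunc.X) * e1
    · simp only [AlgHom.comp_apply, h4, h2, map_mul, AlgHom.commutes, AlgHom.id_apply]
      linear_combination (AdjoinRoot.root (hyperellipticPoly k p)) * e2
  · apply hyp_ext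
    · simp only [AlgHom.comp_apply, h3, h1, map_add, map_mul, AlgHom.commutes, map_neg,
        AlgHom.id_apply]
      linear_combination (algebraMap (RatFunc k) (AdjoinRoot (hyperellipticPoly k p)) RatFunc.X
        - algebraMap k _ b) * e1
    · simp only [AlgHom.comp_apply, h4, h2, map_mul, AlgHom.commutes, AlgHom.id_apply]
      linear_combination (AdjoinRoot.root (hyperellipticPoly k p)) * e2

lemma card_closure_pair {G : Type*} [Group G] (s r : G) (m : ℕ)
    (hs : 0 < orderOf s) (hcop : (orderOf s).Coprime (orderOf r))
    (h : r * s = s ^ m * r) :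
    Nat.card (Subgroup.closure {s, r}) = orderOf s * orderOf r := by
  have hfin : Finite (Subgroup.zpowers s) := by
    exact Set.Finite.to_subtype (finite_zpowers.2 (orderOf_pos_iff.1 hs))
  have hconj : r * s * r⁻¹ = s ^ m := by rw [h]; group
  have hr : r ∈ Subgroup.normalizer (Subgroup.zpowers s : Set G) := by
    have : Finite ((Subgroup.zpowers s : Subgroup G) : Set G) := hfin
    apply Subgroup.mem_normalizer_fintype
    intro n hn
    obtain ⟨j, rfl⟩ := Subgroup.mem_zpowers_iff.1 hn
    rw [← conj_zpow, hconj]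
    exact Subgroup.zpow_mem _ (Subgroup.pow_mem _ (Subgroup.mem_zpowers s) _) _
  have hle : Subgroup.zpowers r ≤ Subgroup.normalizer (Subgroup.zpowers s : Set G) := by
    rwa [Subgroup.zpowers_le]
  have hcl : Subgroup.closure {s, r} = Subgroup.zpowers s ⊔ Subgroup.zpowers r := by
    rw [Subgroup.zpowers_eq_closure, Subgroup.zpowers_eq_closure, ← Subgroup.closure_union]
    rfl
  have hdisj : Disjoint (Subgroup.zpowers s) (Subgroup.zpowers r) := by
    apply Subgroup.disjoint_of_coprime_natCard
    rw [Nat.card_zpowers, Nat.card_zpowers]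
    exact hcop
  have hset := Subgroup.coe_mul_of_right_le_normalizer_left _ _ hle
  have hinj := Subgroup.mul_injective_of_disjoint hdisj
  rw [hcl, ← Nat.card_zpowers, ← Nat.card_zpowers, ← Nat.card_prod]
  symm
  rw [← Nat.card_range_of_injective hinj]
  change _ = Nat.card ((Subgroup.zpowers s ⊔ Subgroup.zpowers r : Subgroup G) : Set G)
  congr 2
  rw [hset]
  ext x
  simp only [Set.mem_mul, Set.mem_range, Prod.exists, Subtype.exists, SetLike.mem_coe, exists_prop]

/-- Assumption 4.1 of the paper: `K = k(X)(√(X^{p²} - X))` is a degree-2 field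
extension of `k(X)`, and it carries `k`-algebra automorphisms `σ, ρ` with
`σ(t) = t + 1`, `σ(y) = y`, `ρ(t) = ξ⁻²t`, `ρ(y) = ξ⁻¹y`, where `σ` has order
`p`, `ρ` has order `2(p-1)`, `ρ^{p-1}` is the hyperelliptic involution, and
`⟨σ, ρ⟩` has order `2p(p-1)`. -/
theorem hyperelliptic_field_and_automorphisms
    (p : ℕ) (hp : p.Prime) (hodd : Odd p)
    (k : Type*) [Field k] [CharP k p]
    (ξ : k) (hξ : IsPrimitiveRoot ξ (2 * (p - 1))) :
    Irreducible (hyperellipticPoly k p) ∧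
    IsField (AdjoinRoot (hyperellipticPoly k p)) ∧
    Module.finrank (RatFunc k) (AdjoinRoot (hyperellipticPoly k p)) = 2 ∧
    ∃ σ ρ : AdjoinRoot (hyperellipticPoly k p) ≃ₐ[k] AdjoinRoot (hyperellipticPoly k p),
      σ (algebraMap (RatFunc k) (AdjoinRoot (hyperellipticPoly k p)) RatFunc.X)
          = algebraMap (RatFunc k) (AdjoinRoot (hyperellipticPoly k p)) RatFunc.X + 1 ∧
      σ (AdjoinRoot.root (hyperellipticPoly k p)) = AdjoinRoot.root (hyperellipticPoly k p) ∧
      ρ (algebraMap (RatFunc k) (AdjoinRoot (hyperellipticPoly k p)) RatFunc.X)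
          = algebraMap k (AdjoinRoot (hyperellipticPoly k p)) ((ξ ^ 2)⁻¹) *
            algebraMap (RatFunc k) (AdjoinRoot (hyperellipticPoly k p)) RatFunc.X ∧
      ρ (AdjoinRoot.root (hyperellipticPoly k p))
          = algebraMap k (AdjoinRoot (hyperellipticPoly k p)) ξ⁻¹ *
            AdjoinRoot.root (hyperellipticPoly k p) ∧
      orderOf σ = p ∧
      orderOf ρ = 2 * (p - 1) ∧
      (ρ ^ (p - 1)) (algebraMap (RatFunc k) (AdjoinRoot (hyperellipticPoly k p)) RatFunc.X)
          = algebraMap (RatFunc k) (AdjoinRoot (hyperellipticPoly k p)) RatFunc.X ∧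
      (ρ ^ (p - 1)) (AdjoinRoot.root (hyperellipticPoly k p))
          = - AdjoinRoot.root (hyperellipticPoly k p) ∧
      Nat.card (Subgroup.closure {σ, ρ} :
          Subgroup (AdjoinRoot (hyperellipticPoly k p) ≃ₐ[k] AdjoinRoot (hyperellipticPoly k p)))
        = 2 * p * (p - 1) := by
  have hirr := hyp_irreducible p hodd hp k
  have : Fact p.Prime := ⟨hp⟩
  have : Fact (Irreducible (hyperellipticPoly k p)) := ⟨hirr⟩
  have hp2 : 2 ≤ p := hp.two_le
  have hp3 : 3 ≤ p := by
    obtain ⟨m, hm⟩ := hodd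
    omega
  have hn : 2 * (p - 1) ≠ 0 := by omega
  have hξ0 : ξ ≠ 0 := hξ.ne_zero hn
  have hξp : (ξ ^ 2) ^ p = ξ ^ 2 := by
    obtain ⟨q, rfl⟩ : ∃ q, p = q + 1 := ⟨p - 1, by omega⟩
    have := hξ.pow_eq_one
    simp only [Nat.add_sub_cancel] at this
    rw [pow_succ, ← pow_mul, this, one_mul]
  have hhalf : ξ⁻¹ ^ (p - 1) = -1 := by
    have h1 : (ξ ^ (p - 1)) ^ 2 = 1 := by
      rw [← pow_mul, mul_comm]; exact hξ.pow_eq_one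
    have h2 : ξ ^ (p - 1) ≠ 1 := hξ.pow_ne_one_of_pos_of_lt (by omega) (by omega)
    have h3 : ξ ^ (p - 1) = -1 := (eq_or_eq_neg_of_sq_eq_sq _ 1 (by rw [h1, one_pow])).resolve_left h2
    rw [inv_pow, h3, inv_neg, inv_one]
  have hy0 : AdjoinRoot.root (hyperellipticPoly k p) ≠ 0 := by
    intro h0
    have h1 := hyp_root_sq p k
    rw [h0, ← map_pow, ← map_sub] at h1
    have h2 : (RatFunc.X ^ p ^ 2 - RatFunc.X : RatFunc k) = 0 := by
      apply (algebraMap (RatFunc k) (AdjoinRoot (hyperellipticPoly k p))).injective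
      rw [← h1, map_zero]; simp
    have h3 := hirr
    rw [hyperellipticPoly, h2, map_zero, sub_zero] at h3
    exact not_irreducible_pow (by norm_num) h3
  obtain ⟨σ, σt, σy⟩ := hyp_equiv p hp k 1 1 1 one_ne_zero (one_pow _) (one_pow _) (one_pow _)
  obtain ⟨ρ, ρt, ρy⟩ := hyp_equiv p hp k (ξ ^ 2)⁻¹ 0 ξ⁻¹ (by simpa using hξ0)
    (by rw [inv_pow, hξp]) (zero_pow hp.ne_zero) (by simp)
  simp only [map_one, one_mul] at σt σy
  simp only [map_zero, add_zero] at ρt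
  have ext' : ∀ φ ψ : AdjoinRoot (hyperellipticPoly k p) ≃ₐ[k] AdjoinRoot (hyperellipticPoly k p),
      φ (algebraMap (RatFunc k) (AdjoinRoot (hyperellipticPoly k p)) RatFunc.X)
        = ψ (algebraMap (RatFunc k) (AdjoinRoot (hyperellipticPoly k p)) RatFunc.X) →
      φ (AdjoinRoot.root (hyperellipticPoly k p)) = ψ (AdjoinRoot.root _) → φ = ψ := by
    intro φ ψ h1 h2
    have := hyp_ext p k (φ := φ.toAlgHom) (ψ := ψ.toAlgHom) h1 h2
    ext x
    exact DFunLike.congr_fun this x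
  have σtn : ∀ n : ℕ, (σ ^ n) (algebraMap (RatFunc k) (AdjoinRoot (hyperellipticPoly k p)) RatFunc.X)
      = algebraMap (RatFunc k) (AdjoinRoot (hyperellipticPoly k p)) RatFunc.X + (n : AdjoinRoot (hyperellipticPoly k p)) := by
    intro n
    induction n with
    | zero => simp
    | succ n ih =>
      rw [pow_succ', AlgEquiv.mul_apply, ih, map_add, σt, map_natCast]
      push_cast; ring
  have σyn : ∀ n : ℕ, (σ ^ n) (AdjoinRoot.root (hyperellipticPoly k p)) = AdjoinRoot.root _ := by
    intro n
    induction n with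
    | zero => simp
    | succ n ih => rw [pow_succ', AlgEquiv.mul_apply, ih, σy]
  have ρtn : ∀ n : ℕ, (ρ ^ n) (algebraMap (RatFunc k) (AdjoinRoot (hyperellipticPoly k p)) RatFunc.X)
      = algebraMap k _ ((ξ ^ 2)⁻¹ ^ n) * algebraMap (RatFunc k) (AdjoinRoot (hyperellipticPoly k p)) RatFunc.X := by
    intro n
    induction n with
    | zero => simp
    | succ n ih =>
      rw [pow_succ', AlgEquiv.mul_apply, ih, map_mul, ρt, AlgEquiv.commutes, ← mul_assoc,
        ← map_mul, ← pow_succ]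
  have ρyn : ∀ n : ℕ, (ρ ^ n) (AdjoinRoot.root (hyperellipticPoly k p))
      = algebraMap k _ (ξ⁻¹ ^ n) * AdjoinRoot.root (hyperellipticPoly k p) := by
    intro n
    induction n with
    | zero => simp
    | succ n ih =>
      rw [pow_succ', AlgEquiv.mul_apply, ih, map_mul, ρy, AlgEquiv.commutes, ← mul_assoc,
        ← map_mul, pow_succ]
  have : CharP (AdjoinRoot (hyperellipticPoly k p)) p :=
    charP_of_injective_algebraMap (algebraMap k _).injective p
  have hσ : orderOf σ = p := by
    apply orderOf_eq_prime
    · apply ext'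
      · rw [σtn, CharP.cast_eq_zero, add_zero]; rfl
      · rw [σyn]; rfl
    · intro h
      rw [h] at σt
      simp at σt
  have hρ : orderOf ρ = 2 * (p - 1) := by
    have key : ∀ n : ℕ, ρ ^ n = 1 ↔ ξ ^ n = 1 := by
      intro n
      constructor
      · intro h
        have h1 := ρyn n
        rw [h, AlgEquiv.one_apply] at h1
        have h2 := mul_right_cancel₀ hy0 ((one_mul _).trans h1)
        have h3 : ξ⁻¹ ^ n = 1 := by
          apply (algebraMap k (AdjoinRoot (hyperellipticPoly k p))).injective
          rw [← h2, map_one]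
        rwa [inv_pow, inv_eq_one] at h3
      · intro h
        apply ext'
        · rw [ρtn, inv_pow, ← pow_mul, mul_comm 2 n, pow_mul, h]; simp
        · rw [ρyn, inv_pow, h]; simp
    rw [hξ.eq_orderOf]
    exact orderOf_eq_orderOf_iff.2 key
  obtain ⟨m, hm⟩ : ∃ m : ℕ, (m : k) = ξ ^ 2 := by
    have h1 := (Subfield.mem_bot_iff_pow_eq_self k p).2 hξp
    obtain ⟨z, hz⟩ := (mem_bot_iff_intCast p k).1 h1
    refine ⟨(z : ZMod p).val, ?_⟩
    rw [← hz]
    have : ((((z : ZMod p).val : ℕ) : ℤ) : k) = (z : k) := by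
      rw [CharP.intCast_eq_intCast k p, ← ZMod.intCast_eq_intCast_iff]
      simp
    simpa using this
  have hcomm : ρ * σ = σ ^ m * ρ := by
    apply ext'
    · have : algebraMap k (AdjoinRoot (hyperellipticPoly k p)) ((ξ ^ 2)⁻¹) * (m : AdjoinRoot (hyperellipticPoly k p)) = 1 := by
        rw [← map_natCast (algebraMap k (AdjoinRoot (hyperellipticPoly k p))), ← map_mul, hm,
          inv_mul_cancel₀ (pow_ne_zero _ hξ0), map_one]
      rw [AlgEquiv.mul_apply, AlgEquiv.mul_apply, σt, ρt, map_add, map_one, ρt, map_mul,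
        AlgEquiv.commutes, σtn, mul_add, this]
    · rw [AlgEquiv.mul_apply, AlgEquiv.mul_apply, σy, ρy, map_mul, AlgEquiv.commutes, σyn]
  refine ⟨hirr, Field.toIsField _, ?_, σ, ρ, σt, σy, ρt, ρy, hσ, hρ, ?_, ?_, ?_⟩
  · rw [(AdjoinRoot.powerBasis hirr.ne_zero).finrank, AdjoinRoot.powerBasis_dim, hyperellipticPoly,
      Polynomial.natDegree_X_pow_sub_C]
  · rw [ρtn, ← inv_pow, ← pow_mul, Nat.mul_comm 2 (p - 1), pow_mul, hhalf]
    simp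
  · rw [ρyn, hhalf]; simp
  · rw [card_closure_pair σ ρ m (by rw [hσ]; exact hp.pos) ?_ hcomm, hσ, hρ]
    · ring
    · rw [hσ, hρ]
      apply (Nat.Prime.coprime_iff_not_dvd hp).2
      intro hd
      rcases (Nat.Prime.dvd_mul hp).1 hd with h | h
      · exact absurd (Nat.le_of_dvd (by norm_num) h) (by omega)
      · exact absurd (Nat.le_of_dvd (by omega) h) (by omega)
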